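/- For p(·) ∈ 𝒞^{log}(ℝⁿ) ∩ 𝒫(ℝⁿ) and 1 < β ≤ p₋, the functional a(Q) = |Q|^{1/β − 1} ‖χ_Q‖_{p'(·)} satisfies the T_∞ condition: there is a constant C such that a(Q') ≤ C a(Q) whenever Q' ⊂ Q are cubes. -/

import Mathlib

open MeasureTheory ENNReal Set

/-- Axis-parallel cubes in `ℝⁿ`. -/
def IsCube {n : ℕ} (Q : Set (Fin n → ℝ)) : Prop :=
  ∃ (c : Fin n → ℝ) (r : ℝ), 0 < r ∧ Q = Set.univ.pi fun i => Set.Icc (c i) (c i + r)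

/-- The Luxemburg norm on the variable exponent Lebesgue space. -/
noncomputable def luxNorm {n : ℕ} (q : (Fin n → ℝ) → ℝ) (f : (Fin n → ℝ) → ℝ) : ℝ :=
  sInf {η : ℝ | 0 < η ∧
    ∫⁻ x, ENNReal.ofReal ((|f x| / η) ^ q x) ∂(volume : Measure (Fin n → ℝ)) ≤ 1}

/-!
The proof rests on the estimate `‖χ_Q‖_{q(·)} ≈ |Q| ^ s`, where `s = 1 / q(x)` for any `x ∈ Q` if
`Q` has side length at most `1`, and `s` is the limit of `1 / q` at infinity otherwise. For small
cubes, local log-Hölder continuity makes `|Q| ^ (1 / q)` essentially constant on `Q`. For a large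
cube of side length `r` the decay condition does the same off a ball of radius comparable to
`r ^ θ`, where `θ ≤ 1 / q`; that ball is too small to influence the norm. Dividing by `|Q| ^ θ`
leaves nonnegative powers of `|Q|`, which increase with `Q`. The stated functional is the case
`q = p'`, `θ = 1 - 1 / β`.
-/

/-- The modular `∫ (|f| / η) ^ q` of `f / η`; the Luxemburg norm of `f` is the infimum of the
`η > 0` at which it is at most `1`. -/
noncomputable def luxModular {n : ℕ} (q f : (Fin n → ℝ) → ℝ) (η : ℝ) : ℝ≥0∞ :=
  ∫⁻ x, ENNReal.ofReal ((|f x| / η) ^ q x)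

section Luxemburg

variable {n : ℕ} {q f : (Fin n → ℝ) → ℝ} {c η : ℝ}

lemma luxNorm_nonneg : 0 ≤ luxNorm q f :=
  Real.sInf_nonneg fun _ hη => hη.1.le

lemma luxNorm_le (hη : 0 < η) (h : luxModular q f η ≤ 1) : luxNorm q f ≤ η :=
  csInf_le ⟨0, fun _ hδ => hδ.1.le⟩ ⟨hη, h⟩

lemma luxModular_mul_le (hq : ∀ x, 1 ≤ q x) (hc : 1 ≤ c) (hη : 0 ≤ η) :
    luxModular q f (c * η) ≤ ENNReal.ofReal c⁻¹ * luxModular q f η := by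
  have hc0 : 0 ≤ c⁻¹ := by positivity
  rw [luxModular, luxModular, ← lintegral_const_mul' _ _ ofReal_ne_top]
  refine lintegral_mono fun x => ?_
  rw [← ENNReal.ofReal_mul hc0]
  refine ENNReal.ofReal_le_ofReal ?_
  calc (|f x| / (c * η)) ^ q x = c⁻¹ ^ q x * (|f x| / η) ^ q x := by
        rw [← Real.mul_rpow hc0 (by positivity)]
        congr 1
        ring
    _ ≤ c⁻¹ * (|f x| / η) ^ q x := by
        gcongr
        exact Real.rpow_le_self_of_le_one hc0 (inv_le_one_of_one_le₀ hc) (hq x)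

lemma luxNorm_le_mul (hq : ∀ x, 1 ≤ q x) (hc : 1 ≤ c) (hη : 0 < η)
    (h : luxModular q f η ≤ ENNReal.ofReal c) : luxNorm q f ≤ c * η := by
  refine luxNorm_le (by positivity) ?_
  calc luxModular q f (c * η) ≤ ENNReal.ofReal c⁻¹ * ENNReal.ofReal c :=
        (luxModular_mul_le hq hc hη.le).trans (by gcongr)
    _ = 1 := by
        rw [← ENNReal.ofReal_mul (by positivity), inv_mul_cancel₀ (by positivity),
          ENNReal.ofReal_one]

lemma exists_luxModular_le_one (hq : ∀ x, 1 ≤ q x) (hf : luxModular q f 1 ≠ ⊤) :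
    ∃ η, 0 < η ∧ luxModular q f η ≤ 1 := by
  set t := (luxModular q f 1).toReal
  refine ⟨max 1 t, by positivity, ?_⟩
  calc luxModular q f (max 1 t) ≤ ENNReal.ofReal (max 1 t)⁻¹ * luxModular q f 1 := by
        simpa only [mul_one] using luxModular_mul_le hq (le_max_left 1 t) zero_le_one
    _ = ENNReal.ofReal ((max 1 t)⁻¹ * t) := by
        rw [ENNReal.ofReal_mul (by positivity), ENNReal.ofReal_toReal hf]
    _ ≤ 1 := by
        rw [ENNReal.ofReal_le_one, inv_mul_le_one₀ (by positivity)]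
        exact le_max_right 1 t

lemma le_mul_luxNorm (hq : ∀ x, 1 ≤ q x) (hf : luxModular q f 1 ≠ ⊤) (hc : 1 ≤ c)
    (h : ENNReal.ofReal c⁻¹ ≤ luxModular q f η) : η ≤ c * luxNorm q f := by
  have hc0 : 0 < c := by positivity
  rw [← div_le_iff₀' hc0]
  refine le_csInf (exists_luxModular_le_one hq hf) ?_
  rintro δ ⟨hδ, hδ1⟩
  by_contra! hlt
  have hcη : c < η / δ := by rwa [lt_div_iff₀ hδ, ← lt_div_iff₀' hc0]
  have hle : ENNReal.ofReal c⁻¹ ≤ ENNReal.ofReal (η / δ)⁻¹ :=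
    calc ENNReal.ofReal c⁻¹ ≤ luxModular q f (η / δ * δ) := by rwa [div_mul_cancel₀ _ hδ.ne']
      _ ≤ ENNReal.ofReal (η / δ)⁻¹ * luxModular q f δ :=
          luxModular_mul_le hq (hc.trans hcη.le) hδ.le
      _ ≤ ENNReal.ofReal (η / δ)⁻¹ := mul_le_of_le_one_right' hδ1
  rw [ENNReal.ofReal_le_ofReal_iff (inv_nonneg.2 (hc0.trans hcη).le),
    inv_le_inv₀ hc0 (hc0.trans hcη)] at hle
  exact hle.not_gt hcη

lemma luxModular_indicator_one (hq : ∀ x, q x ≠ 0) {Q : Set (Fin n → ℝ)} (hQ : MeasurableSet Q)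
    (η : ℝ) :
    luxModular q (Q.indicator fun _ => 1) η = ∫⁻ x in Q, ENNReal.ofReal (η⁻¹ ^ q x) := by
  rw [luxModular, ← lintegral_indicator hQ]
  congr with x
  by_cases hx : x ∈ Q
  · simp [hx]
  · simp [hx, Real.zero_rpow (hq x)]

end Luxemburg

section InvRpow

variable {α : Type*} [MeasurableSpace α] {μ : Measure α} {q : α → ℝ} {A : Set α} {V c η : ℝ}

lemma setLIntegral_inv_rpow_le_one (hq : ∀ x, 0 < q x) (hA : MeasurableSet A) (hV : 0 < V)
    (hη : 0 ≤ η) (hμ : μ A ≤ ENNReal.ofReal V) (h : ∀ x ∈ A, V ^ (q x)⁻¹ ≤ η) :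
    ∫⁻ x in A, ENNReal.ofReal (η⁻¹ ^ q x) ∂μ ≤ 1 := by
  calc ∫⁻ x in A, ENNReal.ofReal (η⁻¹ ^ q x) ∂μ ≤ ∫⁻ _ in A, ENNReal.ofReal V⁻¹ ∂μ := by
        refine setLIntegral_mono' hA fun x hx => ENNReal.ofReal_le_ofReal ?_
        rw [Real.inv_rpow hη]
        exact inv_anti₀ hV ((Real.rpow_inv_le_iff_of_pos hV.le hη (hq x)).1 (h x hx))
    _ ≤ ENNReal.ofReal V⁻¹ * ENNReal.ofReal V := by
        rw [setLIntegral_const]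
        gcongr
    _ = 1 := by
        rw [← ENNReal.ofReal_mul (by positivity), inv_mul_cancel₀ hV.ne', ENNReal.ofReal_one]

lemma ofReal_inv_le_setLIntegral_inv_rpow (hq : ∀ x, 0 < q x) (hA : MeasurableSet A) (hV : 0 < V)
    (hη : 0 < η) (hμ : ENNReal.ofReal (V / c) ≤ μ A) (h : ∀ x ∈ A, η ≤ V ^ (q x)⁻¹) :
    ENNReal.ofReal c⁻¹ ≤ ∫⁻ x in A, ENNReal.ofReal (η⁻¹ ^ q x) ∂μ := by
  calc ENNReal.ofReal c⁻¹ = ENNReal.ofReal V⁻¹ * ENNReal.ofReal (V / c) := by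
        rw [← ENNReal.ofReal_mul (by positivity)]
        congr 1
        field_simp
    _ ≤ ∫⁻ _ in A, ENNReal.ofReal V⁻¹ ∂μ := by
        rw [setLIntegral_const]
        gcongr
    _ ≤ ∫⁻ x in A, ENNReal.ofReal (η⁻¹ ^ q x) ∂μ := by
        refine setLIntegral_mono' hA fun x hx => ENNReal.ofReal_le_ofReal ?_
        rw [Real.inv_rpow hη.le]
        exact inv_anti₀ (by positivity)
          ((Real.le_rpow_inv_iff_of_pos hη.le hV.le (hq x)).1 (h x hx))

end InvRpow

lemma le_mul_luxNorm_indicator_one {n : ℕ} {q : (Fin n → ℝ) → ℝ} {A Q : Set (Fin n → ℝ)}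
    {V c η : ℝ} (hq : ∀ x, 1 ≤ q x) (hQ : MeasurableSet Q) (hQfin : volume Q ≠ ⊤)
    (hA : MeasurableSet A) (hAQ : A ⊆ Q) (hV : 0 < V) (hη : 0 < η) (hc : 1 ≤ c)
    (hvol : ENNReal.ofReal (V / c) ≤ volume A) (h : ∀ x ∈ A, η ≤ V ^ (q x)⁻¹) :
    η ≤ c * luxNorm q (Q.indicator fun _ => 1) := by
  have hq0 : ∀ x, 0 < q x := fun x => one_pos.trans_le (hq x)
  refine le_mul_luxNorm hq ?_ hc ?_
  · simpa [luxModular_indicator_one (fun x => (hq0 x).ne') hQ] using hQfin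
  · rw [luxModular_indicator_one (fun x => (hq0 x).ne') hQ]
    exact (ofReal_inv_le_setLIntegral_inv_rpow hq0 hA hV hη hvol h).trans (lintegral_mono_set hAQ)

section LogHolder

variable {X E : Type*} [PseudoMetricSpace X] [SeminormedAddCommGroup E]

/-- Local log-Hölder continuity, one half of the condition `𝒞^{log}`. At `dist x y = 0` the bound
reads `C / 0 = 0`. -/
def LocallyLogHolder (g : X → ℝ) : Prop :=
  ∃ C, 0 ≤ C ∧ ∀ x y, dist x y ≤ 1 / 2 → |g x - g y| ≤ C / -Real.log (dist x y)

/-- The log-Hölder decay condition at infinity with limit `l`, the other half of `𝒞^{log}`. -/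
def LogHolderDecay (g : E → ℝ) (l : ℝ) : Prop :=
  ∃ C, 0 ≤ C ∧ ∀ x, |g x - l| ≤ C / Real.log (Real.exp 1 + ‖x‖)

lemma LocallyLogHolder.comp_lipschitzWith {g : X → ℝ} {φ : ℝ → ℝ} {K : NNReal}
    (hφ : LipschitzWith K φ) (hg : LocallyLogHolder g) : LocallyLogHolder fun x => φ (g x) := by
  obtain ⟨C, hC, hg⟩ := hg
  refine ⟨K * C, by positivity, fun x y hxy => ?_⟩
  rw [mul_div_assoc]
  have hle : |φ (g x) - φ (g y)| ≤ K * |g x - g y| := hφ.dist_le_mul (g x) (g y)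
  exact hle.trans (mul_le_mul_of_nonneg_left (hg x y hxy) K.2)

lemma LogHolderDecay.comp_lipschitzWith {g : E → ℝ} {l : ℝ} {φ : ℝ → ℝ} {K : NNReal}
    (hφ : LipschitzWith K φ) (hg : LogHolderDecay g l) :
    LogHolderDecay (fun x => φ (g x)) (φ l) := by
  obtain ⟨C, hC, hg⟩ := hg
  refine ⟨K * C, by positivity, fun x => ?_⟩
  rw [mul_div_assoc]
  have hle : |φ (g x) - φ l| ≤ K * |g x - l| := hφ.dist_le_mul (g x) l
  exact hle.trans (mul_le_mul_of_nonneg_left (hg x) K.2)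

lemma LocallyLogHolder.exists_abs_log_mul_le {g : X → ℝ} (hg : LocallyLogHolder g)
    (hosc : ∀ x y, |g x - g y| ≤ 1) :
    ∃ M, 0 ≤ M ∧ ∀ r, 0 < r → r ≤ 1 → ∀ x y, dist x y ≤ r → |Real.log r| * |g x - g y| ≤ M := by
  obtain ⟨C, hC, hg⟩ := hg
  refine ⟨C + 1, by positivity, fun r hr hr1 x y hxy => ?_⟩
  rw [abs_of_nonpos (Real.log_nonpos hr.le hr1)]
  rcases le_or_gt r (1 / 2) with hr2 | hr2
  · have hlog : 0 < -Real.log r := neg_pos.2 (Real.log_neg hr (by linarith))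
    have hle : |g x - g y| ≤ C / -Real.log r := by
      refine (hg x y (hxy.trans hr2)).trans ?_
      rcases (dist_nonneg (x := x) (y := y)).eq_or_lt with h0 | h0
      · rw [← h0, Real.log_zero, neg_zero, _root_.div_zero]
        positivity
      · gcongr
    rw [le_div_iff₀' hlog] at hle
    linarith
  · have hlog : -Real.log r ≤ 1 := by
      rw [← Real.log_inv]
      refine (Real.log_le_sub_one_of_pos (by positivity)).trans ?_
      have : r⁻¹ ≤ 2 := by rw [inv_le_comm₀ hr two_pos]; linarith
      linarith
    exact (mul_le_one₀ hlog (abs_nonneg _) (hosc x y)).trans (by linarith)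

lemma LogHolderDecay.exists_abs_log_mul_le {g : E → ℝ} {l θ : ℝ} (hg : LogHolderDecay g l)
    (hθ : 0 < θ) :
    ∃ M, 0 ≤ M ∧ ∀ r, 1 ≤ r → ∀ x, r ^ θ ≤ 4 * ‖x‖ → |Real.log r| * |g x - l| ≤ M := by
  obtain ⟨C, hC, hg⟩ := hg
  refine ⟨2 / θ * C, by positivity, fun r hr x hx => ?_⟩
  set L := Real.log (Real.exp 1 + ‖x‖)
  have he : 2 < Real.exp 1 := Real.exp_one_gt_two
  have hL : 0 < L := Real.log_pos (by linarith [norm_nonneg x])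
  have hsq : r ^ θ ≤ (Real.exp 1 + ‖x‖) ^ 2 := by nlinarith [norm_nonneg x]
  have hlog : Real.log r ≤ 2 / θ * L := by
    have := Real.log_le_log (by positivity) hsq
    rw [Real.log_rpow (by positivity), Real.log_pow] at this
    rw [div_mul_eq_mul_div, le_div_iff₀' hθ]
    exact_mod_cast this
  calc |Real.log r| * |g x - l| ≤ 2 / θ * L * (C / L) := by
        rw [abs_of_nonneg (Real.log_nonneg hr)]
        gcongr
        exact hg x
    _ = 2 / θ * C := by field_simp

end LogHolder

lemma pow_rpow_le_exp_mul {r a b M : ℝ} (n : ℕ) (hr : 0 < r) (h : |Real.log r| * |a - b| ≤ M) :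
    (r ^ n) ^ a ≤ Real.exp (n * M) * (r ^ n) ^ b := by
  have hlog : Real.log r * (a - b) ≤ M :=
    (le_abs_self _).trans ((abs_mul _ _).trans_le h)
  rw [Real.rpow_def_of_pos (by positivity), Real.rpow_def_of_pos (by positivity), ← Real.exp_add,
    Real.exp_le_exp, Real.log_pow]
  have hn : n * (Real.log r * (a - b)) ≤ n * M := by gcongr
  linarith

lemma volume_closedBall_half {n : ℕ} (a : Fin n → ℝ) {r : ℝ} (hr : 0 ≤ r) :
    volume (Metric.closedBall a (r / 2)) = ENNReal.ofReal (r ^ n) := by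
  rw [Real.volume_pi_closedBall a (by positivity), Fintype.card_fin, mul_div_cancel₀ r two_ne_zero]

lemma IsCube.exists_eq_closedBall {n : ℕ} {Q : Set (Fin n → ℝ)} (hQ : IsCube Q) :
    ∃ a r, 0 < r ∧ Q = Metric.closedBall a (r / 2) := by
  obtain ⟨c, r, hr, rfl⟩ := hQ
  refine ⟨fun i => c i + r / 2, r, hr, ?_⟩
  simp only [closedBall_pi _ (half_pos hr).le, Real.closedBall_eq_Icc, add_sub_cancel_right,
    add_assoc, add_halves]

section CubeEstimates

variable {n : ℕ} {q : (Fin n → ℝ) → ℝ} {θ l K r : ℝ}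

lemma exists_luxNorm_indicator_small_cube (hq : ∀ x, 1 ≤ q x)
    (hloc : LocallyLogHolder fun x => (q x)⁻¹) :
    ∃ K, 0 < K ∧ ∀ r, 0 < r → r ≤ 1 → ∀ a, ∀ x ∈ Metric.closedBall a (r / 2),
      luxNorm q ((Metric.closedBall a (r / 2)).indicator fun _ => 1) ≤ K * (r ^ n) ^ (q x)⁻¹ ∧
      (r ^ n) ^ (q x)⁻¹ ≤ K * luxNorm q ((Metric.closedBall a (r / 2)).indicator fun _ => 1) := by
  have hq0 : ∀ x, 0 < q x := fun x => one_pos.trans_le (hq x)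
  have hosc : ∀ x y, |(q x)⁻¹ - (q y)⁻¹| ≤ 1 := fun x y =>
    abs_sub_le_of_nonneg_of_le (inv_nonneg.2 (hq0 x).le) (inv_le_one_of_one_le₀ (hq x))
      (inv_nonneg.2 (hq0 y).le) (inv_le_one_of_one_le₀ (hq y))
  obtain ⟨M, -, hM⟩ := hloc.exists_abs_log_mul_le hosc
  refine ⟨Real.exp (n * M), Real.exp_pos _, fun r hr hr1 a x hx => ?_⟩
  set Q := Metric.closedBall a (r / 2)
  have hQ : MeasurableSet Q := measurableSet_closedBall
  have hvol : volume Q = ENNReal.ofReal (r ^ n) := volume_closedBall_half a hr.le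
  have hcomp : ∀ y ∈ Q, ∀ z ∈ Q, (r ^ n) ^ (q y)⁻¹ ≤ Real.exp (n * M) * (r ^ n) ^ (q z)⁻¹ :=
    fun y hy z hz => pow_rpow_le_exp_mul n hr <| hM r hr hr1 y z <|
      (dist_triangle_right y z a).trans <| by
        linarith [Metric.mem_closedBall.1 hy, Metric.mem_closedBall.1 hz]
  constructor
  · refine luxNorm_le (by positivity) ?_
    rw [luxModular_indicator_one (fun y => (hq0 y).ne') hQ]
    exact setLIntegral_inv_rpow_le_one hq0 hQ (by positivity) (by positivity) hvol.le
      fun y hy => hcomp y hy x hx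
  · rw [← inv_mul_le_iff₀ (Real.exp_pos _), ← one_mul (luxNorm _ _)]
    refine le_mul_luxNorm_indicator_one (V := r ^ n) hq hQ (hvol ▸ ofReal_ne_top) hQ
      subset_rfl (by positivity) (by positivity) le_rfl (by rw [hvol, div_one]) fun y hy => ?_
    rw [inv_mul_le_iff₀ (Real.exp_pos _)]
    exact hcomp x hx y hy

lemma volume_closedBall_half_half_rpow_le (hr : 1 ≤ r) (hθ : θ ≤ 1) (hn : n ≠ 0) :
    volume (Metric.closedBall (0 : Fin n → ℝ) (r ^ θ / 2 / 2)) ≤ ENNReal.ofReal (r ^ n / 2) := by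
  rw [volume_closedBall_half 0 (by positivity)]
  refine ENNReal.ofReal_le_ofReal ?_
  calc (r ^ θ / 2) ^ n ≤ (r / 2) ^ n := by
        gcongr
        exact Real.rpow_le_self_of_one_le hr hθ
    _ = r ^ n / 2 ^ n := div_pow r 2 n
    _ ≤ r ^ n / 2 := by
        gcongr
        exact le_self_pow₀ one_le_two hn

lemma rpow_le_four_mul_norm_of_notMem {x : Fin n → ℝ}
    (hx : x ∉ Metric.closedBall 0 (r ^ θ / 2 / 2)) : r ^ θ ≤ 4 * ‖x‖ := by
  rw [Metric.mem_closedBall, dist_zero_right] at hx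
  linarith

lemma luxNorm_indicator_large_cube_le (hq : ∀ x, 1 ≤ q x) (hθ : 0 ≤ θ) (hθl : θ ≤ l) (hK : 1 ≤ K)
    (hr : 1 ≤ r)
    (hcomp : ∀ x, r ^ θ ≤ 4 * ‖x‖ → (r ^ n) ^ (q x)⁻¹ ≤ K * (r ^ n) ^ l) (a : Fin n → ℝ) :
    luxNorm q ((Metric.closedBall a (r / 2)).indicator fun _ => 1) ≤ 2 * (K * (r ^ n) ^ l) := by
  have hq0 : ∀ x, 0 < q x := fun x => one_pos.trans_le (hq x)
  set Q := Metric.closedBall a (r / 2)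
  set D := Metric.closedBall (0 : Fin n → ℝ) (r ^ θ / 2 / 2)
  set η := K * (r ^ n) ^ l
  have hQ : MeasurableSet Q := measurableSet_closedBall
  have hD : MeasurableSet D := measurableSet_closedBall
  have hη : 0 < η := by positivity
  have hnear : ∫⁻ x in Q ∩ D, ENNReal.ofReal (η⁻¹ ^ q x) ≤ 1 := by
    have hvol : volume (Q ∩ D) ≤ ENNReal.ofReal ((r ^ θ) ^ n) := by
      refine (measure_mono inter_subset_right).trans ?_
      rw [volume_closedBall_half 0 (by positivity)]
      gcongr
      exact half_le_self (by positivity)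
    have hle : (r ^ θ) ^ n ≤ η := by
      rw [Real.rpow_pow_comm (by positivity)]
      exact (Real.rpow_le_rpow_of_exponent_le (one_le_pow₀ hr) hθl).trans
        (le_mul_of_one_le_left (by positivity) hK)
    exact setLIntegral_inv_rpow_le_one hq0 (hQ.inter hD) (by positivity) hη.le hvol fun x _ =>
      (Real.rpow_le_self_of_one_le (one_le_pow₀ (Real.one_le_rpow hr hθ))
        (inv_le_one_of_one_le₀ (hq x))).trans hle
  have hfar : ∫⁻ x in Q \ D, ENNReal.ofReal (η⁻¹ ^ q x) ≤ 1 :=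
    setLIntegral_inv_rpow_le_one hq0 (hQ.diff hD) (by positivity) hη.le
      ((measure_mono sdiff_subset).trans (volume_closedBall_half a (by positivity)).le)
      fun x hx => hcomp x (rpow_le_four_mul_norm_of_notMem hx.2)
  refine luxNorm_le_mul hq one_le_two hη ?_
  rw [luxModular_indicator_one (fun x => (hq0 x).ne') hQ, ← lintegral_inter_add_sdiff _ Q hD]
  refine (add_le_add hnear hfar).trans_eq ?_
  rw [one_add_one_eq_two, ENNReal.ofReal_ofNat]

lemma le_luxNorm_indicator_large_cube (hq : ∀ x, 1 ≤ q x) (hθ : θ ≤ 1) (hn : n ≠ 0) (hK : 0 < K)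
    (hr : 1 ≤ r) (hcomp : ∀ x, r ^ θ ≤ 4 * ‖x‖ → (r ^ n) ^ l ≤ K * (r ^ n) ^ (q x)⁻¹)
    (a : Fin n → ℝ) :
    (r ^ n) ^ l ≤ 2 * K * luxNorm q ((Metric.closedBall a (r / 2)).indicator fun _ => 1) := by
  set Q := Metric.closedBall a (r / 2)
  set D := Metric.closedBall (0 : Fin n → ℝ) (r ^ θ / 2 / 2)
  have hQ : MeasurableSet Q := measurableSet_closedBall
  have hQvol : volume Q = ENNReal.ofReal (r ^ n) := volume_closedBall_half a (by positivity)
  have hvol : ENNReal.ofReal (r ^ n / 2) ≤ volume (Q \ D) :=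
    calc ENNReal.ofReal (r ^ n / 2) = volume Q - ENNReal.ofReal (r ^ n / 2) := by
          rw [hQvol, ← ENNReal.ofReal_sub _ (by positivity), sub_self_div_two]
      _ ≤ volume Q - volume D := by
          gcongr
          exact volume_closedBall_half_half_rpow_le hr hθ hn
      _ ≤ volume (Q \ D) := le_measure_sdiff
  rw [mul_comm 2 K, mul_assoc, ← inv_mul_le_iff₀ hK]
  refine le_mul_luxNorm_indicator_one hq hQ (hQvol ▸ ofReal_ne_top)
    (hQ.diff measurableSet_closedBall) sdiff_subset (by positivity) (by positivity) one_le_two hvol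
    fun x hx => ?_
  rw [inv_mul_le_iff₀ hK]
  exact hcomp x (rpow_le_four_mul_norm_of_notMem hx.2)

lemma exists_luxNorm_indicator_large_cube (hq : ∀ x, 1 ≤ q x) (hθ : 0 < θ) (hθ1 : θ ≤ 1)
    (hθl : θ ≤ l) (hn : n ≠ 0) (hdec : LogHolderDecay (fun x => (q x)⁻¹) l) :
    ∃ K, 0 < K ∧ ∀ r, 1 ≤ r → ∀ a : Fin n → ℝ,
      luxNorm q ((Metric.closedBall a (r / 2)).indicator fun _ => 1) ≤ K * (r ^ n) ^ l ∧
      (r ^ n) ^ l ≤ K * luxNorm q ((Metric.closedBall a (r / 2)).indicator fun _ => 1) := by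
  obtain ⟨M, hM0, hM⟩ := hdec.exists_abs_log_mul_le hθ
  refine ⟨2 * Real.exp (n * M), by positivity, fun r hr a => ⟨?_, ?_⟩⟩
  · rw [mul_assoc]
    exact luxNorm_indicator_large_cube_le hq hθ.le hθl (Real.one_le_exp (by positivity)) hr
      (fun x hx => pow_rpow_le_exp_mul n (by positivity) (hM r hr x hx)) a
  · refine le_luxNorm_indicator_large_cube hq hθ1 hn (Real.exp_pos _) hr
      (fun x hx => pow_rpow_le_exp_mul n (by positivity) ?_) a
    rw [abs_sub_comm]
    exact hM r hr x hx

/-- The exponent `s` for which `‖χ_Q‖ ≈ |Q| ^ s`, where `Q` is a cube of side length `r` containing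
`x` and `g = 1 / q` tends to `l` at infinity. -/
noncomputable def cubeExponent (g : (Fin n → ℝ) → ℝ) (l r : ℝ) (x : Fin n → ℝ) : ℝ :=
  if r ≤ 1 then g x else l

lemma exists_luxNorm_indicator_cube (hq : ∀ x, 1 ≤ q x) (hθ : 0 < θ) (hθ1 : θ ≤ 1) (hθl : θ ≤ l)
    (hn : n ≠ 0) (hloc : LocallyLogHolder fun x => (q x)⁻¹)
    (hdec : LogHolderDecay (fun x => (q x)⁻¹) l) :
    ∃ K, 0 < K ∧ ∀ r, 0 < r → ∀ a, ∀ x ∈ Metric.closedBall a (r / 2),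
      luxNorm q ((Metric.closedBall a (r / 2)).indicator fun _ => 1) ≤
        K * (r ^ n) ^ cubeExponent (fun x => (q x)⁻¹) l r x ∧
      (r ^ n) ^ cubeExponent (fun x => (q x)⁻¹) l r x ≤
        K * luxNorm q ((Metric.closedBall a (r / 2)).indicator fun _ => 1) := by
  obtain ⟨K₁, hK₁, h₁⟩ := exists_luxNorm_indicator_small_cube hq hloc
  obtain ⟨K₂, -, h₂⟩ := exists_luxNorm_indicator_large_cube hq hθ hθ1 hθl hn hdec
  refine ⟨max K₁ K₂, by positivity, fun r hr a x hx => ?_⟩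
  have hN := luxNorm_nonneg (q := q) (f := (Metric.closedBall a (r / 2)).indicator fun _ => 1)
  rw [cubeExponent]
  split_ifs with hr1
  · obtain ⟨hup, hlo⟩ := h₁ r hr hr1 a x hx
    exact ⟨hup.trans (by gcongr; exact le_max_left K₁ K₂),
      hlo.trans (by gcongr; exact le_max_left K₁ K₂)⟩
  · obtain ⟨hup, hlo⟩ := h₂ r (not_le.1 hr1).le a
    exact ⟨hup.trans (by gcongr; exact le_max_right K₁ K₂),
      hlo.trans (by gcongr; exact le_max_right K₁ K₂)⟩

lemma pow_rpow_cubeExponent_sub_mono {g : (Fin n → ℝ) → ℝ} {r' : ℝ} {x : Fin n → ℝ} (hg : θ ≤ g x)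
    (hθl : θ ≤ l) (hr' : 0 < r') (hr : r' ≤ r) :
    (r' ^ n) ^ (cubeExponent g l r' x - θ) ≤ (r ^ n) ^ (cubeExponent g l r x - θ) := by
  have hpow : r' ^ n ≤ r ^ n := by gcongr
  unfold cubeExponent
  split_ifs with h' h h
  · exact Real.rpow_le_rpow (by positivity) hpow (by linarith)
  · calc (r' ^ n) ^ (g x - θ) ≤ 1 :=
          Real.rpow_le_one (by positivity) (pow_le_one₀ hr'.le h') (by linarith)
      _ ≤ (r ^ n) ^ (l - θ) := Real.one_le_rpow (one_le_pow₀ (not_le.1 h).le) (by linarith)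
  · exact absurd (hr.trans h) h'
  · exact Real.rpow_le_rpow (by positivity) hpow (by linarith)

end CubeEstimates

lemma rpow_neg_mul_le_of_rpow_sub_le {V V' N N' K s s' θ : ℝ} (hV : 0 < V) (hV' : 0 < V')
    (hK : 0 ≤ K) (hN' : N' ≤ K * V' ^ s') (hN : V ^ s ≤ K * N)
    (hmono : V' ^ (s' - θ) ≤ V ^ (s - θ)) :
    V' ^ (-θ) * N' ≤ K * K * (V ^ (-θ) * N) := by
  calc V' ^ (-θ) * N' ≤ V' ^ (-θ) * (K * V' ^ s') := by gcongr
    _ = K * V' ^ (s' - θ) := by rw [sub_eq_neg_add, Real.rpow_add hV']; ring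
    _ ≤ K * V ^ (s - θ) := by gcongr
    _ = K * (V ^ (-θ) * V ^ s) := by rw [sub_eq_neg_add, Real.rpow_add hV]
    _ ≤ K * (V ^ (-θ) * (K * N)) := by gcongr
    _ = K * K * (V ^ (-θ) * N) := by ring

lemma IsCube.eq_univ_of_subsingleton {n : ℕ} [Subsingleton (Fin n → ℝ)] {Q : Set (Fin n → ℝ)}
    (hQ : IsCube Q) : Q = univ := by
  obtain ⟨a, r, hr, rfl⟩ := hQ.exists_eq_closedBall
  exact Nonempty.eq_univ ⟨a, Metric.mem_closedBall_self (half_pos hr).le⟩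

section ConjExponent

open Real (conjExponent)

variable {t β : ℝ}

lemma one_le_conjExponent (ht : 1 < t) : 1 ≤ conjExponent t :=
  (Real.HolderConjugate.conjExponent ht).symm.lt.le

lemma inv_conjExponent (ht : 1 < t) : (conjExponent t)⁻¹ = 1 - t⁻¹ :=
  (Real.HolderConjugate.conjExponent ht).one_sub_inv.symm

lemma one_sub_inv_le_inv_conjExponent (hβ : 1 < β) (hβt : β ≤ t) :
    1 - β⁻¹ ≤ (conjExponent t)⁻¹ := by
  rw [inv_conjExponent (hβ.trans_le hβt)]
  gcongr

lemma lipschitzWith_one_sub_inv_max_one : LipschitzWith 1 fun t : ℝ => 1 - (max t 1)⁻¹ := by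
  refine LipschitzWith.of_dist_le_mul fun s t => ?_
  have hs := le_max_right s 1
  have ht := le_max_right t 1
  have heq : 1 - (max s 1)⁻¹ - (1 - (max t 1)⁻¹) = (max s 1 - max t 1) / (max s 1 * max t 1) := by
    field_simp
    ring
  rw [Real.dist_eq, Real.dist_eq, heq, abs_div, abs_of_pos (by positivity : 0 < max s 1 * max t 1),
    NNReal.coe_one, one_mul]
  exact (div_le_self (abs_nonneg _) (one_le_mul_of_one_le_of_one_le hs ht)).trans
    (abs_max_sub_max_le_abs s t 1)

variable {X E : Type*} [PseudoMetricSpace X] [SeminormedAddCommGroup E]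

lemma LocallyLogHolder.inv_conjExponent {p : X → ℝ} (hp : ∀ x, 1 < p x) (h : LocallyLogHolder p) :
    LocallyLogHolder fun x => (conjExponent (p x))⁻¹ := by
  simpa only [_root_.inv_conjExponent (hp _), max_eq_left (hp _).le] using
    h.comp_lipschitzWith lipschitzWith_one_sub_inv_max_one

lemma LogHolderDecay.inv_conjExponent {p : E → ℝ} {l : ℝ} (hp : ∀ x, 1 < p x)
    (h : LogHolderDecay p l) :
    LogHolderDecay (fun x => (conjExponent (p x))⁻¹) (1 - (max l 1)⁻¹) := by
  simpa only [_root_.inv_conjExponent (hp _), max_eq_left (hp _).le] using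
    h.comp_lipschitzWith lipschitzWith_one_sub_inv_max_one

end ConjExponent

theorem functional_T_infty_general {n : ℕ} {q : (Fin n → ℝ) → ℝ} {θ l : ℝ} (hq : ∀ x, 1 ≤ q x)
    (hθ : 0 < θ) (hθq : ∀ x, θ ≤ (q x)⁻¹) (hloc : LocallyLogHolder fun x => (q x)⁻¹)
    (hdec : LogHolderDecay (fun x => (q x)⁻¹) l) :
    ∃ C, 0 < C ∧ ∀ Q Q' : Set (Fin n → ℝ), IsCube Q → IsCube Q' → Q' ⊆ Q →
      (volume Q').toReal ^ (-θ) * luxNorm q (Q'.indicator fun _ => 1) ≤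
        C * ((volume Q).toReal ^ (-θ) * luxNorm q (Q.indicator fun _ => 1)) := by
  rcases eq_or_ne n 0 with rfl | hn
  · refine ⟨1, one_pos, fun Q Q' hQ hQ' _ => ?_⟩
    rw [hQ.eq_univ_of_subsingleton, hQ'.eq_univ_of_subsingleton, one_mul]
  have hθ1 : θ ≤ 1 := (hθq 0).trans (inv_le_one_of_one_le₀ (hq 0))
  -- As `θ ≤ 1 / q`, truncating the limit from below at `θ` preserves the decay.
  have hdec' : LogHolderDecay (fun x => (q x)⁻¹) (max θ l) := by
    simpa only [max_eq_right (hθq _), id] using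
      hdec.comp_lipschitzWith (LipschitzWith.id.const_max θ)
  obtain ⟨K, hK, hest⟩ :=
    exists_luxNorm_indicator_cube hq hθ hθ1 (le_max_left θ l) hn hloc hdec'
  refine ⟨K * K, by positivity, fun Q Q' hQ hQ' hsub => ?_⟩
  obtain ⟨a, r, hr, rfl⟩ := hQ.exists_eq_closedBall
  obtain ⟨a', r', hr', rfl⟩ := hQ'.exists_eq_closedBall
  have ha' : a' ∈ Metric.closedBall a' (r' / 2) := Metric.mem_closedBall_self (half_pos hr').le
  have hvol := measure_mono (μ := volume) hsub
  simp only [volume_closedBall_half _ hr.le, volume_closedBall_half _ hr'.le] at hvol ⊢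
  rw [ENNReal.ofReal_le_ofReal_iff (by positivity)] at hvol
  rw [ENNReal.toReal_ofReal (by positivity), ENNReal.toReal_ofReal (by positivity)]
  exact rpow_neg_mul_le_of_rpow_sub_le (by positivity) (by positivity) hK.le
    (hest r' hr' a' a' ha').1 (hest r hr a a' (hsub ha')).2
    (pow_rpow_cubeExponent_sub_mono (hθq a') (le_max_left θ l) hr'
      (le_of_pow_le_pow_left₀ hn hr.le hvol))

/-- for `p(·) ∈ 𝒞^{log}(ℝⁿ) ∩ 𝒫(ℝⁿ)` and `1 < β ≤ p₋`, the
functional `a(Q) = |Q|^{1/β − 1} ‖χ_Q‖_{p'(·)}` satisfies the `T_∞` condition: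
`a(Q') ≤ C a(Q)` whenever `Q' ⊂ Q` are cubes. -/
theorem functional_T_infty {n : ℕ} (p : (Fin n → ℝ) → ℝ) (hpmeas : Measurable p)
    (pm pp : ℝ) (hpm : 1 < pm) (hpb : ∀ x, pm ≤ p x ∧ p x ≤ pp)
    (Cloc : ℝ) (hCloc : 0 < Cloc)
    (hlog : ∀ x y : Fin n → ℝ, dist x y ≤ 1/2 →
      |p x - p y| ≤ Cloc / (-Real.log (dist x y)))
    (pinf : ℝ) (Cinf : ℝ) (hCinf : 0 < Cinf)
    (hinf : ∀ x : Fin n → ℝ, |p x - pinf| ≤ Cinf / Real.log (Real.exp 1 + ‖x‖))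
    (β : ℝ) (hβ : 1 < β) (hβp : β ≤ pm) :
    ∃ C : ℝ, 0 < C ∧ ∀ Q Q' : Set (Fin n → ℝ), IsCube Q → IsCube Q' → Q' ⊆ Q →
      (volume Q').toReal ^ (1 / β - 1) *
          luxNorm (fun x => p x / (p x - 1)) (Q'.indicator fun _ => (1:ℝ)) ≤
        C * ((volume Q).toReal ^ (1 / β - 1) *
          luxNorm (fun x => p x / (p x - 1)) (Q.indicator fun _ => (1:ℝ))) := by
  have hp : ∀ x, 1 < p x := fun x => hpm.trans_le (hpb x).1
  simpa only [neg_sub, one_div, Real.conjExponent] using functional_T_infty_general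
    (fun x => one_le_conjExponent (hp x)) (sub_pos.2 (inv_lt_one_of_one_lt₀ hβ))
    (fun x => one_sub_inv_le_inv_conjExponent hβ (hβp.trans (hpb x).1))
    (LocallyLogHolder.inv_conjExponent hp ⟨Cloc, hCloc.le, hlog⟩)
    (LogHolderDecay.inv_conjExponent hp ⟨Cinf, hCinf.le, hinf⟩)
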